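/- (Uniqueness for the forced linear KdV equation on the half-line.) Let u₀ : ℝ → ℂ be a Schwartz function, g₀ : ℝ → ℂ be infinitely differentiable, and f : ℝ² → ℂ be a Schwartz function, satisfying the compatibility conditions u₀(0) = g₀(0) and g₀'(0) = −u₀'''(0) + f(0,0). Suppose V and W are functions defined on Q̄ ∖ {(0,0)}, each three times continuously differentiable there, and each satisfies: (i) ∂V/∂t + ∂³V/∂x³ = f(x,t) at every point of Q; (ii) lim_{t→0⁺} V(x,t) = u₀(x) for every x > 0; (iii) lim_{x→0⁺} V(x,t) = g₀(t) for every t > 0; (iv) for every t > 0, lim_{x→∞} V(x,t) = 0, lim_{x→∞} ∂V/∂x (x,t) = 0, and sup_{x ≥ 1} |∂²V/∂x² (x,t)| < ∞; (v) for every T > 0 there exists a Lebesgue-integrable function B_T : (0,∞) → ℝ such that |V(x,t)|² ≤ B_T(x) and |∂V/∂t (x,t)|² ≤ B_T(x) for all x > 0 and all 0 < t ≤ T. Then V = W on Q. -/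

import Mathlib

open MeasureTheory Filter Set

/-- The closed quarter-plane minus the corner: `Q̄ ∖ {(0,0)}`. -/
def closedQuarterMinusCorner : Set (ℝ × ℝ) :=
  {p : ℝ × ℝ | 0 ≤ p.1 ∧ 0 ≤ p.2} \ {(0, 0)}

/-- `V` is an admissible solution of the forced linear KdV IBVP on the half-line with
forcing `f`, initial datum `u₀` and boundary datum `g₀`:  it is `C³` on `Q̄ ∖ {(0,0)}`,
solves `∂V/∂t + ∂³V/∂x³ = f` on `Q`, attains the initial and boundary data as one-sided
limits, vanishes together with its first `x`-derivative (with bounded second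
`x`-derivative) as `x → ∞`, and `|V|²`, `|∂V/∂t|²` are dominated, uniformly for
`0 < t ≤ T`, by an integrable function of `x`. -/
def IsAdmissibleKdVSolution (f : ℝ × ℝ → ℂ) (u₀ g₀ : ℝ → ℂ) (V : ℝ → ℝ → ℂ) : Prop :=
  ContDiffOn ℝ 3 (fun p : ℝ × ℝ => V p.1 p.2) closedQuarterMinusCorner ∧
  (∀ x t : ℝ, 0 < x → 0 < t →
    deriv (fun s => V x s) t + iteratedDeriv 3 (fun y => V y t) x = f (x, t)) ∧
  (∀ x : ℝ, 0 < x → Tendsto (fun t => V x t) (nhdsWithin 0 (Ioi 0)) (nhds (u₀ x))) ∧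
  (∀ t : ℝ, 0 < t → Tendsto (fun x => V x t) (nhdsWithin 0 (Ioi 0)) (nhds (g₀ t))) ∧
  (∀ t : ℝ, 0 < t →
    Tendsto (fun x => V x t) atTop (nhds (0 : ℂ)) ∧
    Tendsto (fun x => deriv (fun y => V y t) x) atTop (nhds (0 : ℂ)) ∧
    ∃ M : ℝ, ∀ x : ℝ, 1 ≤ x → ‖iteratedDeriv 2 (fun y => V y t) x‖ ≤ M) ∧
  (∀ T : ℝ, 0 < T → ∃ B : ℝ → ℝ, IntegrableOn B (Ioi 0) ∧
    ∀ x t : ℝ, 0 < x → 0 < t → t ≤ T →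
      ‖V x t‖ ^ 2 ≤ B x ∧ ‖deriv (fun s => V x s) t‖ ^ 2 ≤ B x)

/-!
The difference `w` of two solutions solves the homogeneous equation with zero data, so it suffices
to control its energy `E t = ∫ ‖w(x,t)‖² dx`. Since `2⟪w, wₓₓₓ⟫` is the `x`-derivative of the flux
`2⟪w, wₓₓ⟫ - ‖wₓ‖²`, which vanishes at infinity, and since `w(0,t) = 0`, differentiating under the
integral sign gives `E' t = -‖wₓ(0,t)‖² ≤ 0`. By dominated convergence `E t → 0` as `t → 0⁺`, hence
`E` vanishes identically, and so does `w` by continuity in `x`.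
-/

open scoped Topology InnerProductSpace

section HalfLine

variable {E : Type*} [NormedAddCommGroup E] [NormedSpace ℝ E] {v w : ℝ → E} {a x : ℝ}
  {n : WithTop ℕ∞} {k : ℕ}

theorem iteratedDerivWithin_Ici_eq_iteratedDeriv (hv : ContDiffOn ℝ n v (Ici a)) (hk : k ≤ n)
    (hx : a < x) : iteratedDerivWithin k v (Ici a) x = iteratedDeriv k v x :=
  iteratedDerivWithin_eq_iteratedDeriv (uniqueDiffOn_Ici a)
    ((hv.contDiffAt (Ici_mem_nhds hx)).of_le hk) hx.le

theorem hasDerivAt_iteratedDerivWithin_Ici (hv : ContDiffOn ℝ n v (Ici a)) (hk : k < n)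
    (hx : a < x) :
    HasDerivAt (iteratedDerivWithin k v (Ici a)) (iteratedDerivWithin (k + 1) v (Ici a) x) x := by
  rw [iteratedDerivWithin_succ]
  exact (hv.differentiableOn_iteratedDerivWithin hk (uniqueDiffOn_Ici a) x
    hx.le).hasDerivWithinAt.hasDerivAt (Ici_mem_nhds hx)

/-- The decay condition imposed on the spatial profiles of an admissible solution: `v` and `v'`
tend to `0` at `+∞`, while `v''` is bounded on `[1, ∞)`. -/
def DecaysWithDeriv (v : ℝ → E) : Prop :=
  Tendsto v atTop (𝓝 0) ∧ Tendsto (fun x => deriv v x) atTop (𝓝 0) ∧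
    ∃ M : ℝ, ∀ x : ℝ, 1 ≤ x → ‖iteratedDeriv 2 v x‖ ≤ M

theorem DecaysWithDeriv.sub (hv : DecaysWithDeriv v) (hw : DecaysWithDeriv w)
    (hv_smooth : ContDiffOn ℝ 2 v (Ioi 0)) (hw_smooth : ContDiffOn ℝ 2 w (Ioi 0)) :
    DecaysWithDeriv (v - w) := by
  obtain ⟨hv₀, hv₁, M, hM⟩ := hv
  obtain ⟨hw₀, hw₁, N, hN⟩ := hw
  have smooth_at (x : ℝ) (hx : 0 < x) : ContDiffAt ℝ 2 v x ∧ ContDiffAt ℝ 2 w x :=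
    ⟨hv_smooth.contDiffAt (Ioi_mem_nhds hx), hw_smooth.contDiffAt (Ioi_mem_nhds hx)⟩
  refine ⟨sub_zero (0 : E) ▸ hv₀.sub hw₀, ?_, M + N, fun x hx => ?_⟩
  · refine (sub_zero (0 : E) ▸ hv₁.sub hw₁).congr' ?_
    filter_upwards [eventually_gt_atTop 0] with x hx
    obtain ⟨hvx, hwx⟩ := smooth_at x hx
    exact (deriv_sub (hvx.differentiableAt two_ne_zero) (hwx.differentiableAt two_ne_zero)).symm
  · obtain ⟨hvx, hwx⟩ := smooth_at x (by linarith)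
    rw [iteratedDeriv_sub hvx hwx]
    exact (norm_sub_le _ _).trans (add_le_add (hM x hx) (hN x hx))

end HalfLine

section InnerProduct

variable {E : Type*} [NormedAddCommGroup E] [InnerProductSpace ℝ E]

theorem integral_Ioi_inner_of_hasDerivAt_three {v v₁ v₂ v₃ : ℝ → E} {a : ℝ}
    (hc : ContinuousWithinAt v (Ici a) a) (hc₁ : ContinuousWithinAt v₁ (Ici a) a)
    (hc₂ : ContinuousWithinAt v₂ (Ici a) a) (hd : ∀ x ∈ Ioi a, HasDerivAt v (v₁ x) x)
    (hd₁ : ∀ x ∈ Ioi a, HasDerivAt v₁ (v₂ x) x) (hd₂ : ∀ x ∈ Ioi a, HasDerivAt v₂ (v₃ x) x)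
    (hlim : Tendsto v atTop (𝓝 0)) (hlim₁ : Tendsto v₁ atTop (𝓝 0))
    (hbdd₂ : IsBoundedUnder (· ≤ ·) atTop (fun x => ‖v₂ x‖))
    (hint : IntegrableOn (fun x => ⟪v x, v₃ x⟫_ℝ) (Ioi a)) :
    ∫ x in Ioi a, ⟪v x, v₃ x⟫_ℝ = ‖v₁ a‖ ^ 2 / 2 - ⟪v a, v₂ a⟫_ℝ := by
  have hflux_cont : ContinuousWithinAt (fun x => ⟪v x, v₂ x⟫_ℝ - ‖v₁ x‖ ^ 2 / 2) (Ici a) a :=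
    (hc.inner (𝕜 := ℝ) hc₂).sub ((hc₁.norm.pow 2).div_const 2)
  have hflux_deriv : ∀ x ∈ Ioi a,
      HasDerivAt (fun x => ⟪v x, v₂ x⟫_ℝ - ‖v₁ x‖ ^ 2 / 2) ⟪v x, v₃ x⟫_ℝ x := fun x hx => by
    refine (((hd x hx).inner ℝ (hd₂ x hx)).sub
      ((hd₁ x hx).norm_sq.div_const 2)).congr_deriv ?_
    ring
  have hflux_lim : Tendsto (fun x => ⟪v x, v₂ x⟫_ℝ - ‖v₁ x‖ ^ 2 / 2) atTop (𝓝 0) := by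
    have hinner : Tendsto (fun x => ⟪v x, v₂ x⟫_ℝ) atTop (𝓝 0) :=
      hlim.op_zero_isBoundedUnder_le hbdd₂ _ norm_inner_le_norm
    simpa using hinner.sub ((hlim₁.norm.pow 2).div_const 2)
  rw [integral_Ioi_of_hasDerivAt_of_tendsto hflux_cont hflux_deriv hint hflux_lim]
  ring

theorem integral_Ioi_inner_iteratedDeriv_three {v : ℝ → E} {a : ℝ}
    (hv : ContDiffOn ℝ 3 v (Ici a)) (hdecay : DecaysWithDeriv v)
    (hint : IntegrableOn (fun x => ⟪v x, iteratedDeriv 3 v x⟫_ℝ) (Ioi a)) :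
    ∫ x in Ioi a, ⟪v x, iteratedDeriv 3 v x⟫_ℝ =
      ‖derivWithin v (Ici a) a‖ ^ 2 / 2 - ⟪v a, iteratedDerivWithin 2 v (Ici a) a⟫_ℝ := by
  obtain ⟨hlim, hlim₁, M, hM⟩ := hdecay
  have hcont (k : ℕ) (hk : k ≤ (3 : WithTop ℕ∞)) :
      ContinuousWithinAt (iteratedDerivWithin k v (Ici a)) (Ici a) a :=
    hv.continuousOn_iteratedDerivWithin hk (uniqueDiffOn_Ici a) a self_mem_Ici
  have hderiv (k : ℕ) (hk : k < (3 : WithTop ℕ∞)) (x : ℝ) (hx : x ∈ Ioi a) :=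
    hasDerivAt_iteratedDerivWithin_Ici hv hk hx
  have heq (k : ℕ) (hk : k ≤ (3 : WithTop ℕ∞)) :
      iteratedDeriv k v =ᶠ[atTop] iteratedDerivWithin k v (Ici a) := by
    filter_upwards [eventually_gt_atTop a] with x hx
    exact (iteratedDerivWithin_Ici_eq_iteratedDeriv hv hk hx).symm
  have hbdd₂ : IsBoundedUnder (· ≤ ·) atTop (fun x => ‖iteratedDerivWithin 2 v (Ici a) x‖) := by
    refine isBoundedUnder_of_eventually_le (a := M) ?_
    filter_upwards [heq 2 (by norm_num), eventually_ge_atTop 1] with x hx hx1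
    exact hx ▸ hM x hx1
  have hthird : EqOn (fun x => ⟪v x, iteratedDerivWithin 3 v (Ici a) x⟫_ℝ)
      (fun x => ⟪v x, iteratedDeriv 3 v x⟫_ℝ) (Ioi a) := fun x hx => by
    simp only [iteratedDerivWithin_Ici_eq_iteratedDeriv hv (k := 3) le_rfl hx]
  rw [← setIntegral_congr_fun measurableSet_Ioi hthird, ← iteratedDerivWithin_one]
  refine integral_Ioi_inner_of_hasDerivAt_three ?_ (hcont 1 (by norm_num))
    (hcont 2 (by norm_num)) ?_ (hderiv 1 (by norm_num)) (hderiv 2 (by norm_num)) hlim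
    ((iteratedDeriv_one (f := v) ▸ hlim₁).congr' (heq 1 (by norm_num))) hbdd₂
    (hint.congr_fun hthird.symm measurableSet_Ioi)
  · simpa using hcont 0 (by norm_num)
  · simpa using hderiv 0 (by norm_num)

theorem hasDerivAt_integral_norm_sq {α : Type*} [MeasurableSpace α] {μ : Measure α}
    {F F' : ℝ → α → E} {B : α → ℝ} {s : Set ℝ} {t : ℝ} (hs : s ∈ 𝓝 t)
    (hF_meas : ∀ᶠ r in 𝓝 t, AEStronglyMeasurable (F r) μ)
    (hF'_meas : AEStronglyMeasurable (F' t) μ) (hB : Integrable B μ)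
    (hbound : ∀ᵐ a ∂μ, ∀ r ∈ s, ‖F r a‖ ^ 2 ≤ B a ∧ ‖F' r a‖ ^ 2 ≤ B a)
    (hderiv : ∀ᵐ a ∂μ, ∀ r ∈ s, HasDerivAt (fun r => F r a) (F' r a) r) :
    Integrable (fun a => ⟪F t a, F' t a⟫_ℝ) μ ∧
      HasDerivAt (fun r => ∫ a, ‖F r a‖ ^ 2 ∂μ) (2 * ∫ a, ⟪F t a, F' t a⟫_ℝ ∂μ) t := by
  have hint : Integrable (fun a => ‖F t a‖ ^ 2) μ := by
    refine hB.mono' (hF_meas.self_of_nhds.norm.pow 2) ?_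
    filter_upwards [hbound] with a ha
    simpa using (ha t (mem_of_mem_nhds hs)).1
  have hderiv_bound : ∀ᵐ a ∂μ, ∀ r ∈ s, ‖2 * ⟪F r a, F' r a⟫_ℝ‖ ≤ 2 * B a := by
    filter_upwards [hbound] with a ha r hr
    obtain ⟨hF, hF'⟩ := ha r hr
    calc ‖2 * ⟪F r a, F' r a⟫_ℝ‖ = 2 * |⟪F r a, F' r a⟫_ℝ| := by simp
      _ ≤ 2 * (‖F r a‖ * ‖F' r a‖) := by gcongr; exact abs_real_inner_le_norm _ _
      _ = 2 * ‖F r a‖ * ‖F' r a‖ := by ring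
      _ ≤ ‖F r a‖ ^ 2 + ‖F' r a‖ ^ 2 := two_mul_le_add_sq _ _
      _ ≤ 2 * B a := by linarith
  have hmain := hasDerivAt_integral_of_dominated_loc_of_deriv_le hs
    (hF_meas.mono fun r hr => hr.norm.pow 2) hint
    ((hF_meas.self_of_nhds.inner (𝕜 := ℝ) hF'_meas).const_mul 2) hderiv_bound (hB.const_mul 2)
    (hderiv.mono fun a ha r hr => (ha r hr).norm_sq)
  rw [integral_const_mul] at hmain
  exact ⟨(integrable_const_mul_iff (isUnit_iff_ne_zero.mpr two_ne_zero) _).mp hmain.1, hmain.2⟩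

end InnerProduct

section QuarterPlane

variable {E : Type*} [NormedAddCommGroup E] [NormedSpace ℝ E] {V : ℝ → ℝ → E} {x t : ℝ}
  {n : WithTop ℕ∞}

theorem mk_mem_closedQuarterMinusCorner (hx : 0 ≤ x) (ht : 0 < t) :
    (x, t) ∈ closedQuarterMinusCorner :=
  ⟨⟨hx, ht.le⟩, fun h => ht.ne' (congrArg Prod.snd h)⟩

theorem closedQuarterMinusCorner_mem_nhds (hx : 0 < x) (ht : 0 < t) :
    closedQuarterMinusCorner ∈ 𝓝 (x, t) :=
  mem_of_superset (prod_mem_nhds (Ioi_mem_nhds hx) (Ioi_mem_nhds ht)) fun _ hp =>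
    mk_mem_closedQuarterMinusCorner (le_of_lt hp.1) hp.2

theorem contDiffOn_slice_fst
    (hV : ContDiffOn ℝ n (fun p : ℝ × ℝ => V p.1 p.2) closedQuarterMinusCorner) (ht : 0 < t) :
    ContDiffOn ℝ n (fun y => V y t) (Ici 0) :=
  hV.comp (f := fun y : ℝ => (y, t)) (by fun_prop) fun _ hy =>
    mk_mem_closedQuarterMinusCorner hy ht

theorem contDiffAt_slice_snd
    (hV : ContDiffOn ℝ n (fun p : ℝ × ℝ => V p.1 p.2) closedQuarterMinusCorner)
    (hx : 0 < x) (ht : 0 < t) : ContDiffAt ℝ n (fun s => V x s) t :=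
  (hV.contDiffAt (closedQuarterMinusCorner_mem_nhds hx ht)).comp t
    (f := fun s : ℝ => (x, s)) (by fun_prop)

end QuarterPlane

/-- The energy `∫₀^∞ ‖V(x,t)‖² dx` at time `t`, whose monotonicity in `t` yields uniqueness. -/
noncomputable def halfLineEnergy (V : ℝ → ℝ → ℂ) (t : ℝ) : ℝ :=
  ∫ x in Ioi 0, ‖V x t‖ ^ 2

namespace IsAdmissibleKdVSolution

variable {f f₁ f₂ : ℝ × ℝ → ℂ} {u u₁ u₂ g g₁ g₂ : ℝ → ℂ} {V W : ℝ → ℝ → ℂ} {x t : ℝ}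

theorem contDiffOn_space (hV : IsAdmissibleKdVSolution f u g V) (ht : 0 < t) :
    ContDiffOn ℝ 3 (fun y => V y t) (Ici 0) :=
  contDiffOn_slice_fst hV.1 ht

theorem differentiableAt_time (hV : IsAdmissibleKdVSolution f u g V) (hx : 0 < x) (ht : 0 < t) :
    DifferentiableAt ℝ (fun s => V x s) t :=
  (contDiffAt_slice_snd hV.1 hx ht).differentiableAt three_ne_zero

theorem hasDerivAt_time (hV : IsAdmissibleKdVSolution f u g V) (hx : 0 < x) (ht : 0 < t) :
    HasDerivAt (fun s => V x s) (f (x, t) - iteratedDeriv 3 (fun y => V y t) x) t :=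
  (hV.differentiableAt_time hx ht).hasDerivAt.congr_deriv (eq_sub_of_add_eq (hV.2.1 x t hx ht))

theorem apply_zero (hV : IsAdmissibleKdVSolution f u g V) (ht : 0 < t) : V 0 t = g t := by
  have ⟨_, _, _, hboundary, _⟩ := hV
  exact tendsto_nhds_unique
    (((hV.contDiffOn_space ht).continuousOn 0 self_mem_Ici).mono Ioi_subset_Ici_self)
    (hboundary t ht)

theorem sub (hV : IsAdmissibleKdVSolution f₁ u₁ g₁ V) (hW : IsAdmissibleKdVSolution f₂ u₂ g₂ W) :
    IsAdmissibleKdVSolution (f₁ - f₂) (u₁ - u₂) (g₁ - g₂) (V - W) := by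
  have ⟨hV_smooth, hV_pde, hV_init, hV_bdry, hV_decay, hV_dom⟩ := hV
  have ⟨hW_smooth, hW_pde, hW_init, hW_bdry, hW_decay, hW_dom⟩ := hW
  have deriv_time_sub (x t : ℝ) (hx : 0 < x) (ht : 0 < t) :
      deriv (fun s => (V - W) x s) t = deriv (fun s => V x s) t - deriv (fun s => W x s) t :=
    deriv_fun_sub (hV.differentiableAt_time hx ht) (hW.differentiableAt_time hx ht)
  have norm_sub_sq_le (a b : ℂ) : ‖a - b‖ ^ 2 ≤ 2 * (‖a‖ ^ 2 + ‖b‖ ^ 2) :=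
    (pow_le_pow_left₀ (norm_nonneg _) (norm_sub_le a b) 2).trans add_sq_le
  refine ⟨hV_smooth.sub hW_smooth, fun x t hx ht => ?_,
    fun x hx => (hV_init x hx).sub (hW_init x hx),
    fun t ht => (hV_bdry t ht).sub (hW_bdry t ht), fun t ht => ?_, fun T hT => ?_⟩
  · have deriv_space_sub : iteratedDeriv 3 (fun y => (V - W) y t) x =
        iteratedDeriv 3 (fun y => V y t) x - iteratedDeriv 3 (fun y => W y t) x :=
      iteratedDeriv_sub ((hV.contDiffOn_space ht).contDiffAt (Ici_mem_nhds hx))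
        ((hW.contDiffOn_space ht).contDiffAt (Ici_mem_nhds hx))
    rw [deriv_time_sub x t hx ht, deriv_space_sub, Pi.sub_apply]
    linear_combination hV_pde x t hx ht - hW_pde x t hx ht
  · exact DecaysWithDeriv.sub (hV_decay t ht) (hW_decay t ht)
      (((hV.contDiffOn_space ht).mono Ioi_subset_Ici_self).of_le (by norm_num))
      (((hW.contDiffOn_space ht).mono Ioi_subset_Ici_self).of_le (by norm_num))
  · obtain ⟨B, hB_int, hB⟩ := hV_dom T hT
    obtain ⟨C, hC_int, hC⟩ := hW_dom T hT
    refine ⟨fun x => 2 * (B x + C x), (hB_int.add hC_int).const_mul 2, fun x t hx ht htT => ?_⟩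
    obtain ⟨hV_le, hVt_le⟩ := hB x t hx ht htT
    obtain ⟨hW_le, hWt_le⟩ := hC x t hx ht htT
    rw [deriv_time_sub x t hx ht]
    exact ⟨(norm_sub_sq_le _ _).trans (by linarith), (norm_sub_sq_le _ _).trans (by linarith)⟩

theorem continuousOn_space (hV : IsAdmissibleKdVSolution f u g V) (ht : 0 < t) :
    ContinuousOn (fun x => V x t) (Ioi 0) :=
  (hV.contDiffOn_space ht).continuousOn.mono Ioi_subset_Ici_self

theorem aestronglyMeasurable (hV : IsAdmissibleKdVSolution f u g V) (ht : 0 < t) :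
    AEStronglyMeasurable (fun x => V x t) (volume.restrict (Ioi 0)) :=
  (hV.continuousOn_space ht).aestronglyMeasurable measurableSet_Ioi

theorem aestronglyMeasurable_iteratedDeriv_three (hV : IsAdmissibleKdVSolution f u g V)
    (ht : 0 < t) :
    AEStronglyMeasurable (iteratedDeriv 3 fun y => V y t) (volume.restrict (Ioi 0)) := by
  refine ContinuousOn.aestronglyMeasurable ?_ measurableSet_Ioi
  have hcont := (hV.contDiffOn_space ht).continuousOn_iteratedDerivWithin (m := 3) le_rfl
    (uniqueDiffOn_Ici 0)
  exact (hcont.mono Ioi_subset_Ici_self).congr fun x hx =>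
    (iteratedDerivWithin_Ici_eq_iteratedDeriv (hV.contDiffOn_space ht) (k := 3) le_rfl hx).symm

theorem integrableOn_norm_sq (hV : IsAdmissibleKdVSolution f u g V) (ht : 0 < t) :
    IntegrableOn (fun x => ‖V x t‖ ^ 2) (Ioi 0) := by
  have ⟨_, _, _, _, _, hdom⟩ := hV
  obtain ⟨B, hB_int, hB⟩ := hdom t ht
  refine hB_int.mono' ((hV.aestronglyMeasurable ht).norm.pow 2) ?_
  filter_upwards [ae_restrict_mem measurableSet_Ioi] with x hx
  simpa using (hB x t hx ht le_rfl).1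

theorem hasDerivAt_halfLineEnergy (hV : IsAdmissibleKdVSolution 0 u g V) (ht : 0 < t) :
    HasDerivAt (halfLineEnergy V)
      (2 * ⟪g t, iteratedDerivWithin 2 (fun x => V x t) (Ici 0) 0⟫_ℝ -
        ‖derivWithin (fun x => V x t) (Ici 0) 0‖ ^ 2) t := by
  have ⟨_, _, _, _, hdecay, hdom⟩ := hV
  obtain ⟨B, hB_int, hB⟩ := hdom (t + 1) (by linarith)
  have htime (x s : ℝ) (hx : 0 < x) (hs : 0 < s) :
      HasDerivAt (fun r => V x r) (-iteratedDeriv 3 (fun y => V y s) x) s := by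
    simpa using hV.hasDerivAt_time hx hs
  obtain ⟨hint, hderiv⟩ := hasDerivAt_integral_norm_sq (μ := volume.restrict (Ioi 0))
    (F := fun s x => V x s) (F' := fun s x => -iteratedDeriv 3 (fun y => V y s) x)
    (Ioo_mem_nhds ht (lt_add_one t))
    (by filter_upwards [Ioi_mem_nhds ht] with s hs using hV.aestronglyMeasurable hs)
    (hV.aestronglyMeasurable_iteratedDeriv_three ht).neg hB_int
    (by
      filter_upwards [ae_restrict_mem measurableSet_Ioi] with x hx s hs
      simpa only [(htime x s hx hs.1).deriv] using hB x s hx hs.1 hs.2.le)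
    (by
      filter_upwards [ae_restrict_mem measurableSet_Ioi] with x hx s hs
      exact htime x s hx hs.1)
  simp only [inner_neg_right] at hint hderiv
  refine hderiv.congr_deriv ?_
  rw [integral_neg, integral_Ioi_inner_iteratedDeriv_three (hV.contDiffOn_space ht) (hdecay t ht)
    (by simpa only [IntegrableOn, Pi.neg_def, neg_neg] using hint.neg), hV.apply_zero ht]
  ring

theorem antitoneOn_halfLineEnergy (hV : IsAdmissibleKdVSolution 0 u 0 V) :
    AntitoneOn (halfLineEnergy V) (Ioi 0) := by
  refine antitoneOn_of_hasDerivWithinAt_nonpos (convex_Ioi 0)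
    (fun t ht => (hV.hasDerivAt_halfLineEnergy ht).continuousAt.continuousWithinAt)
    (fun t ht => (hV.hasDerivAt_halfLineEnergy (interior_subset ht)).hasDerivWithinAt)
    fun t _ => ?_
  simp

theorem tendsto_halfLineEnergy (hV : IsAdmissibleKdVSolution f u g V) :
    Tendsto (halfLineEnergy V) (𝓝[>] 0) (𝓝 (∫ x in Ioi 0, ‖u x‖ ^ 2)) := by
  have ⟨_, _, hinit, _, _, hdom⟩ := hV
  obtain ⟨B, hB_int, hB⟩ := hdom 1 one_pos
  refine tendsto_integral_filter_of_dominated_convergence B ?_ ?_ hB_int ?_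
  · filter_upwards [self_mem_nhdsWithin] with t ht
    exact (hV.aestronglyMeasurable ht).norm.pow 2
  · filter_upwards [Ioc_mem_nhdsGT one_pos] with t ht
    filter_upwards [ae_restrict_mem measurableSet_Ioi] with x hx
    simpa using (hB x t hx ht.1 ht.2).1
  · filter_upwards [ae_restrict_mem measurableSet_Ioi] with x hx
    exact (hinit x hx).norm.pow 2

theorem eq_zero_of_halfLineEnergy_eq_zero (hV : IsAdmissibleKdVSolution f u g V) (ht : 0 < t)
    (hE : halfLineEnergy V t = 0) (hx : 0 < x) : V x t = 0 := by
  have hae : (fun x => ‖V x t‖ ^ 2) =ᵐ[volume.restrict (Ioi 0)] 0 :=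
    (integral_eq_zero_iff_of_nonneg (fun _ => by positivity) (hV.integrableOn_norm_sq ht)).mp hE
  have hzero := Measure.eqOn_open_of_ae_eq hae isOpen_Ioi
    ((hV.continuousOn_space ht).norm.pow 2) continuousOn_const
  simpa using hzero hx

theorem eq_zero (hV : IsAdmissibleKdVSolution 0 0 0 V) (hx : 0 < x) (ht : 0 < t) : V x t = 0 := by
  have hlim : Tendsto (halfLineEnergy V) (𝓝[>] 0) (𝓝 0) := by
    simpa using hV.tendsto_halfLineEnergy
  have hle : halfLineEnergy V t ≤ 0 := by
    refine ge_of_tendsto hlim ?_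
    filter_upwards [Ioc_mem_nhdsGT ht] with s hs
    exact hV.antitoneOn_halfLineEnergy hs.1 ht hs.2
  exact hV.eq_zero_of_halfLineEnergy_eq_zero ht
    (hle.antisymm (integral_nonneg fun _ => by positivity)) hx

end IsAdmissibleKdVSolution

theorem kdv_uniqueness_general {f : ℝ × ℝ → ℂ} {u₀ g₀ : ℝ → ℂ} {V W : ℝ → ℝ → ℂ}
    (hV : IsAdmissibleKdVSolution f u₀ g₀ V) (hW : IsAdmissibleKdVSolution f u₀ g₀ W) :
    ∀ x t : ℝ, 0 < x → 0 < t → V x t = W x t := by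
  have hdiff : IsAdmissibleKdVSolution 0 0 0 (V - W) := by simpa only [sub_self] using hV.sub hW
  exact fun x t hx ht => sub_eq_zero.mp (hdiff.eq_zero hx ht)

/-- Uniqueness for the forced linear KdV equation on the half-line, under the
compatibility conditions `u₀(0) = g₀(0)` and `g₀'(0) = −u₀'''(0) + f(0,0)`. -/
theorem kdv_uniqueness (u₀ : SchwartzMap ℝ ℂ) (g₀ : ℝ → ℂ)
    (hg₀ : ContDiff ℝ (⊤ : ℕ∞) g₀) (f : SchwartzMap (ℝ × ℝ) ℂ)
    (hcomp₁ : u₀ 0 = g₀ 0)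
    (hcomp₂ : deriv g₀ 0 = -(deriv (deriv (deriv (u₀ : ℝ → ℂ))) 0) + f (0, 0))
    (V W : ℝ → ℝ → ℂ)
    (hV : IsAdmissibleKdVSolution (f : ℝ × ℝ → ℂ) (u₀ : ℝ → ℂ) g₀ V)
    (hW : IsAdmissibleKdVSolution (f : ℝ × ℝ → ℂ) (u₀ : ℝ → ℂ) g₀ W) :
    ∀ x t : ℝ, 0 < x → 0 < t → V x t = W x t :=
  kdv_uniqueness_general hV hW
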